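/- If M is an a-relative quasi Buchsbaum R-module, then M is an a-relative generalized Cohen-Macaulay R-module. -/

import Mathlib

/-!
Formalization of a statement from "A theory of relative generalized Cohen-Macaulay modules"
by Divaani-Aazar, Ghanbari Doust, Tousi and Zakeri.

Throughout, `R` is a commutative Noetherian ring and `M` a finitely generated `R`-module.
Conventions used below:
* `locH I i M` is the local cohomology module `H^i_I(M)` (Mathlib's `localCohomology`).
* Conditions `cd(I,M) = c`, `ara(I,M) = n`, `f_I(M) = f`, `grade(I,M) = r` are expressed by
  the predicates `IsCd`, `IsAra`, `IsFinDim`, `IsGrade`.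
* Sequences are given as functions `Fin r → R`; `pSpan M x i = ⟨x_0,…,x_{i-1}⟩M`.
* Koszul (co)homology is defined via the explicit (co)chain complex on the `p`-element
  subsets of `{0,…,n-1}`, and the canonical map `λ^i` into local cohomology is the structure
  map (at exponent 1) into the direct limit of Koszul cohomologies of powers of the sequence,
  which is the realization of `H^i_{⟨x⟩}(M)` used in the paper (2.1(iv)).
-/

open CategoryTheory

noncomputable section

variable {R : Type} [CommRing R]

/-! ### Sequences: prefix spans, weak sequences, filter regular sequences, d-sequences -/

/-- `pSpan M x i` is the submodule `⟨x_0, …, x_{i-1}⟩M` of `M`. -/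
def pSpan (M : Type) [AddCommGroup M] [Module R M] {r : ℕ} (x : Fin r → R) (i : Fin r) :
    Submodule R M :=
  Ideal.span (x '' {j | j < i}) • (⊤ : Submodule R M)

/-- `x_1, …, x_r` is an `I`-weak sequence on `M`:
`(⟨x_1,…,x_{i-1}⟩M :_M x_i) ⊆ (⟨x_1,…,x_{i-1}⟩M :_M I)` for all `i`. -/
def IsWeakSeq (I : Ideal R) (M : Type) [AddCommGroup M] [Module R M] {r : ℕ}
    (x : Fin r → R) : Prop :=
  ∀ i : Fin r, ∀ m : M, x i • m ∈ pSpan M x i → ∀ a ∈ I, a • m ∈ pSpan M x i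

/-- `x_1, …, x_r` is an `I`-filter regular sequence on `M`:
`(⟨x_1,…,x_{i-1}⟩M :_M x_i) ⊆ ⋃ₜ (⟨x_1,…,x_{i-1}⟩M :_M I^t)` for all `i`. -/
def IsFilterRegSeq (I : Ideal R) (M : Type) [AddCommGroup M] [Module R M] {r : ℕ}
    (x : Fin r → R) : Prop :=
  ∀ i : Fin r, ∀ m : M, x i • m ∈ pSpan M x i →
    ∃ t : ℕ, ∀ a ∈ I ^ t, a • m ∈ pSpan M x i

/-- An unconditioned `I`-filter regular sequence: filter regular in any order. -/
def IsUncondFilterRegSeq (I : Ideal R) (M : Type) [AddCommGroup M] [Module R M] {r : ℕ}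
    (x : Fin r → R) : Prop :=
  ∀ σ : Equiv.Perm (Fin r), IsFilterRegSeq I M (x ∘ σ)

/-- An unconditioned `I`-weak sequence: all positive powers, in any order, form an
`I`-weak sequence. -/
def IsUncondWeakSeq (I : Ideal R) (M : Type) [AddCommGroup M] [Module R M] {r : ℕ}
    (x : Fin r → R) : Prop :=
  ∀ σ : Equiv.Perm (Fin r), ∀ α : Fin r → ℕ, (∀ k, 0 < α k) →
    IsWeakSeq I M fun k => x (σ k) ^ α k

/-- `x_1, …, x_r` is a d-sequence on `M`:
`(⟨x_1,…,x_{i-1}⟩M :_M x_i x_j) = (⟨x_1,…,x_{i-1}⟩M :_M x_j)` for all `i ≤ j`. -/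
def IsDSeq (M : Type) [AddCommGroup M] [Module R M] {r : ℕ} (x : Fin r → R) : Prop :=
  ∀ i j : Fin r, i ≤ j → ∀ m : M,
    ((x i * x j) • m ∈ pSpan M x i ↔ x j • m ∈ pSpan M x i)

/-- An u.s.d-sequence on `M`: all positive powers, in any order, form a d-sequence. -/
def IsUSDSeq (M : Type) [AddCommGroup M] [Module R M] {r : ℕ} (x : Fin r → R) : Prop :=
  ∀ σ : Equiv.Perm (Fin r), ∀ α : Fin r → ℕ, (∀ k, 0 < α k) →
    IsDSeq M fun k => x (σ k) ^ α k

/-! ### Local cohomology, cohomological dimension, arithmetic rank -/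

/-- The `i`-th local cohomology module `H^i_I(M)`. -/
abbrev locH (I : Ideal R) (i : ℕ) (M : Type) [AddCommGroup M] [Module R M] : ModuleCat R :=
  (localCohomology I i).obj (ModuleCat.of R M)

/-- `cd(I, M) = c`: the cohomological dimension of `I` on `M` equals `c`, i.e.
`H^c_I(M) ≠ 0` and `H^i_I(M) = 0` for all `i > c`. -/
def IsCd (I : Ideal R) (M : Type) [AddCommGroup M] [Module R M] (c : ℕ) : Prop :=
  Nontrivial (locH I c M) ∧ ∀ i : ℕ, c < i → Subsingleton (locH I i M)

/-- `f_I(M) = f`: the `I`-finiteness dimension of `M` equals `f`, i.e. `f` is the least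
integer such that `H^f_I(M)` is not finitely generated. -/
def IsFinDim (I : Ideal R) (M : Type) [AddCommGroup M] [Module R M] (f : ℕ) : Prop :=
  (∀ i : ℕ, i < f → Module.Finite R (locH I i M)) ∧ ¬ Module.Finite R (locH I f M)

/-- `M` is `I`-relative generalized Cohen-Macaulay: `cd(I,M) ≤ 0` or `cd(I,M) = f_I(M)`. -/
def IsRelGCM (I : Ideal R) (M : Type) [AddCommGroup M] [Module R M] : Prop :=
  (∀ i : ℕ, 0 < i → Subsingleton (locH I i M)) ∨
    ∃ c : ℕ, IsCd I M c ∧ IsFinDim I M c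

/-- `ara(I, M) = n`: the arithmetic rank of `I` with respect to `M` equals `n`, i.e. `n` is the
least integer such that there are `x_1, …, x_n ∈ R` with
`Rad(⟨x_1,…,x_n⟩ + Ann M) = Rad(I + Ann M)`. -/
def IsAra (I : Ideal R) (M : Type) [AddCommGroup M] [Module R M] (n : ℕ) : Prop :=
  IsLeast {k : ℕ | ∃ x : Fin k → R,
    (Ideal.span (Set.range x) + Module.annihilator R M).radical
      = (I + Module.annihilator R M).radical} n

/-- `x_1, …, x_c` is an `I`-relative system of parameters of `M` (where `c = cd(I,M)`):
the `x_i` lie in `I` and `Rad(⟨x_1,…,x_c⟩ + Ann M) = Rad(I + Ann M)`. -/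
def IsRsop (I : Ideal R) (M : Type) [AddCommGroup M] [Module R M] {c : ℕ}
    (x : Fin c → R) : Prop :=
  (∀ j, x j ∈ I) ∧
    (Ideal.span (Set.range x) + Module.annihilator R M).radical
      = (I + Module.annihilator R M).radical

/-! ### Relative Buchsbaum and relative quasi Buchsbaum modules -/

/-- `M` is `I`-relative Buchsbaum: `cd(I,M) = ara(I,M)` and every `I`-relative system of
parameters of `M` is an `I`-weak sequence on `M`. -/
def IsRelBuchsbaum (I : Ideal R) (M : Type) [AddCommGroup M] [Module R M] : Prop :=
  ∃ c : ℕ, IsCd I M c ∧ IsAra I M c ∧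
    ∀ x : Fin c → R, IsRsop I M x → IsWeakSeq I M x

/-- `M` is `I`-relative quasi Buchsbaum: `cd(I,M) = ara(I,M)` and every `I`-relative system of
parameters of `M` contained in `I²` is an `I`-weak sequence on `M`. -/
def IsRelQuasiBuchsbaum (I : Ideal R) (M : Type) [AddCommGroup M] [Module R M] : Prop :=
  ∃ c : ℕ, IsCd I M c ∧ IsAra I M c ∧
    ∀ x : Fin c → R, IsRsop I M x → (∀ j, x j ∈ I ^ 2) → IsWeakSeq I M x

/-!
Suppose that all positive powers of `x_1, …, x_r ∈ I` form `I`-weak sequences on `M`, and let `z` be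
a positive power of `x_1`. The kernel of `z` on `M` is annihilated by `I`, so it has no local
cohomology in positive degrees, and `M → zM` induces isomorphisms there. The long exact sequence of
`0 → zM → M → M/zM → 0` thus gives the exact sequences
`H^i(M/zM) → H^{i+1}(M) → H^{i+1}(M) → H^{i+1}(M/zM)`, whose middle map is multiplication by `z`.

By induction on `r`, `I` annihilates `H^i(M)` for `i < r`, since each element of `H^{i+1}(M)` is
killed by some `z` and so comes from `H^i(M/zM)`. With `z = x_1`, the module `H^{i+1}(M)` is then a
quotient of `H^i(M/zM)`, hence finitely generated. If moreover `x_1, …, x_r` generate `I` up to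
radical modulo `Ann M`, then `H^r(M/zM) = 0`, so `z` acts surjectively on `H^r(M)`; were this module
finitely generated, `z` would act bijectively on it, which an `I`-torsion module allows only if it
is zero. For a quasi Buchsbaum module, all this applies to the squares of any system of parameters.
-/

/-! ### The long exact sequences of left derived functors and of `Ext` -/

section LeftDerived

open Limits

variable {C D : Type*} [Category* C] [Abelian C] [Category* D] [Abelian D]

lemma leftDerived_app_comp_isoLeftDerivedObj_hom [HasProjectiveResolutions C] {F G : C ⥤ D}
    [F.Additive] [G.Additive] (α : F ⟶ G) {X : C} (P : ProjectiveResolution X) (n : ℕ) :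
    (NatTrans.leftDerived α n).app X ≫ (P.isoLeftDerivedObj G n).hom =
      (P.isoLeftDerivedObj F n).hom ≫
        HomologicalComplex.homologyMap ((NatTrans.mapHomologicalComplex α _).app P.complex) n :=
  (Iso.eq_comp_inv _).1 ((P.leftDerived_app_eq α n).trans (Category.assoc _ _ _).symm)

variable (S : ShortComplex (C ⥤ D))

/-- A short complex of functors that is short exact on projective objects. -/
def IsExactOnProjectives : Prop :=
  ∀ P : C, Projective P → (S.map ((evaluation C D).obj P)).ShortExact

variable [S.X₁.Additive] [S.X₂.Additive] [S.X₃.Additive]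

/-- The short complex of complexes `S.X₁(K) ⟶ S.X₂(K) ⟶ S.X₃(K)` obtained by applying a short
complex of additive functors degreewise to a complex `K`. -/
@[simps]
def mapComplexShortComplex {ι : Type*} (c : ComplexShape ι) :
    HomologicalComplex C c ⥤ ShortComplex (HomologicalComplex D c) where
  obj K :=
    { f := (NatTrans.mapHomologicalComplex S.f c).app K
      g := (NatTrans.mapHomologicalComplex S.g c).app K
      zero := by
        ext i
        exact NatTrans.congr_app S.zero (K.X i) }
  map φ :=
    { τ₁ := (S.X₁.mapHomologicalComplex c).map φ
      τ₂ := (S.X₂.mapHomologicalComplex c).map φ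
      τ₃ := (S.X₃.mapHomologicalComplex c).map φ
      comm₁₂ := (NatTrans.mapHomologicalComplex S.f c).naturality φ
      comm₂₃ := (NatTrans.mapHomologicalComplex S.g c).naturality φ }

namespace IsExactOnProjectives

variable {S} (hS : IsExactOnProjectives S)
include hS

lemma shortExact_projectiveResolution {X : C} (P : ProjectiveResolution X) :
    ((mapComplexShortComplex S _).obj P.complex).ShortExact :=
  HomologicalComplex.shortExact_of_degreewise_shortExact _ fun i => hS _ (P.projective i)

variable [HasProjectiveResolutions C]

/-- The connecting morphism of the long exact sequence of left derived functors. -/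
def leftDerivedδ (n : ℕ) : S.X₃.leftDerived (n + 1) ⟶ S.X₁.leftDerived n where
  app X := ((projectiveResolution X).isoLeftDerivedObj S.X₃ (n + 1)).hom ≫
    (hS.shortExact_projectiveResolution (projectiveResolution X)).δ (n + 1) n rfl ≫
    ((projectiveResolution X).isoLeftDerivedObj S.X₁ n).inv
  naturality X Y φ := by
    let P := projectiveResolution X
    let Q := projectiveResolution Y
    have hφ := ProjectiveResolution.lift_commutes_zero φ P Q
    have h₃ : CommSq _ _ _ _ :=
      ⟨ProjectiveResolution.isoLeftDerivedObj_hom_naturality φ P Q _ hφ S.X₃ (n + 1)⟩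
    have h₁ : CommSq _ _ _ _ :=
      ⟨(ProjectiveResolution.isoLeftDerivedObj_inv_naturality φ P Q _ hφ S.X₁ n).symm⟩
    have hδ : CommSq _ _ _ _ :=
      ⟨(HomologicalComplex.HomologySequence.δ_naturality
        ((mapComplexShortComplex S _).map (ProjectiveResolution.lift φ P Q))
        (hS.shortExact_projectiveResolution P) (hS.shortExact_projectiveResolution Q)
        (n + 1) n rfl).symm⟩
    exact (h₃.vert_comp (hδ.vert_comp h₁)).w

lemma leftDerivedδ_app_comp_isoLeftDerivedObj_hom (n : ℕ) (X : C) :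
    (hS.leftDerivedδ n).app X ≫ ((projectiveResolution X).isoLeftDerivedObj S.X₁ n).hom =
      ((projectiveResolution X).isoLeftDerivedObj S.X₃ (n + 1)).hom ≫
        (hS.shortExact_projectiveResolution (projectiveResolution X)).δ (n + 1) n rfl :=
  (Iso.eq_comp_inv _).1 (Category.assoc _ _ _).symm

lemma leftDerived_exact (n : ℕ) (X : C) :
    (ComposableArrows.mk₅ ((NatTrans.leftDerived S.f (n + 1)).app X)
      ((NatTrans.leftDerived S.g (n + 1)).app X) ((hS.leftDerivedδ n).app X)
      ((NatTrans.leftDerived S.f n).app X) ((NatTrans.leftDerived S.g n).app X)).Exact := by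
  let P := projectiveResolution X
  exact ComposableArrows.exact_of_iso (ComposableArrows.isoMk₅
      (P.isoLeftDerivedObj S.X₁ (n + 1)) (P.isoLeftDerivedObj S.X₂ (n + 1))
      (P.isoLeftDerivedObj S.X₃ (n + 1)) (P.isoLeftDerivedObj S.X₁ n)
      (P.isoLeftDerivedObj S.X₂ n) (P.isoLeftDerivedObj S.X₃ n)
      (leftDerived_app_comp_isoLeftDerivedObj_hom S.f P (n + 1))
      (leftDerived_app_comp_isoLeftDerivedObj_hom S.g P (n + 1))
      (hS.leftDerivedδ_app_comp_isoLeftDerivedObj_hom n X)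
      (leftDerived_app_comp_isoLeftDerivedObj_hom S.f P n)
      (leftDerived_app_comp_isoLeftDerivedObj_hom S.g P n)).symm
    (HomologicalComplex.HomologySequence.composableArrows₅_exact
      (hS.shortExact_projectiveResolution P) (n + 1) n rfl)

end IsExactOnProjectives

end LeftDerived

section LeftDerivedNaturality

open Limits

variable {C D : Type*} [Category* C] [Abelian C] [Category* D] [Abelian D]

lemma homologyMap_eq_app_of_f_eq_app (e : 𝟭 D ⟶ 𝟭 D) {ι : Type*} {c : ComplexShape ι}
    {K : HomologicalComplex D c} {φ : K ⟶ K} (hφ : ∀ i, φ.f i = e.app (K.X i)) (i : ι) :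
    HomologicalComplex.homologyMap φ i = e.app (K.homology i) := by
  have hcycles : HomologicalComplex.cyclesMap φ i = e.app (K.cycles i) := by
    rw [← cancel_mono (K.iCycles i), HomologicalComplex.cyclesMap_i, hφ]
    exact e.naturality (K.iCycles i)
  rw [← cancel_epi (K.homologyπ i), HomologicalComplex.homologyπ_naturality, hcycles]
  exact (e.naturality (K.homologyπ i)).symm

variable [HasProjectiveResolutions C] {F G : C ⥤ D} [F.Additive] [G.Additive]

lemma leftDerived_app_eq_app_of_app_eq_app (e : 𝟭 D ⟶ 𝟭 D) {α : F ⟶ F}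
    (hα : ∀ X, α.app X = e.app (F.obj X)) (n : ℕ) (X : C) :
    (NatTrans.leftDerived α n).app X = e.app ((F.leftDerived n).obj X) := by
  let P := projectiveResolution X
  rw [← cancel_mono (P.isoLeftDerivedObj F n).hom, leftDerived_app_comp_isoLeftDerivedObj_hom,
    homologyMap_eq_app_of_f_eq_app e fun i => hα (P.complex.X i)]
  exact e.naturality (P.isoLeftDerivedObj F n).hom

lemma leftDerived_zero_comp_fromLeftDerivedZero (α : F ⟶ G) :
    NatTrans.leftDerived α 0 ≫ G.fromLeftDerivedZero = F.fromLeftDerivedZero ≫ α := by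
  ext X
  let P := projectiveResolution X
  have hopcycles : HomologicalComplex.opcyclesMap
        ((NatTrans.mapHomologicalComplex α _).app P.complex) 0 ≫ P.fromLeftDerivedZero' G =
      P.fromLeftDerivedZero' F ≫ α.app X := by
    rw [← cancel_epi (HomologicalComplex.pOpcycles _ _), HomologicalComplex.p_opcyclesMap_assoc,
      P.pOpcycles_comp_fromLeftDerivedZero', P.pOpcycles_comp_fromLeftDerivedZero'_assoc]
    exact (α.naturality (P.π.f 0)).symm
  rw [NatTrans.comp_app, NatTrans.comp_app, P.fromLeftDerivedZero_eq, P.fromLeftDerivedZero_eq]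
  exact (CommSq.vert_comp ⟨leftDerived_app_comp_isoLeftDerivedObj_hom α P 0⟩
    (CommSq.vert_comp ⟨HomologicalComplex.homologyι_naturality _ 0⟩ ⟨hopcycles⟩)).w

end LeftDerivedNaturality

section Ext

open Limits Opposite

variable (A : Type*) [Ring A] {C : Type*} [Category* C] [Abelian C] [Linear A C]

/-- The short complex of functors `Hom(-, S.X₃)ᵒᵖ ⟶ Hom(-, S.X₂)ᵒᵖ ⟶ Hom(-, S.X₁)ᵒᵖ`. Opposites are
taken because Mathlib defines `Ext` through left derived functors into `(ModuleCat A)ᵒᵖ`. -/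
@[simps]
def linearYonedaShortComplex (S : ShortComplex C) : ShortComplex (C ⥤ (ModuleCat A)ᵒᵖ) where
  X₁ := ((linearYoneda A C).obj S.X₃).rightOp
  X₂ := ((linearYoneda A C).obj S.X₂).rightOp
  X₃ := ((linearYoneda A C).obj S.X₁).rightOp
  f := NatTrans.rightOp ((linearYoneda A C).map S.g)
  g := NatTrans.rightOp ((linearYoneda A C).map S.f)
  zero := by
    ext X
    refine Quiver.Hom.unop_inj (ModuleCat.hom_ext (LinearMap.ext fun (φ : X ⟶ S.X₁) => ?_))
    exact (Category.assoc _ _ _).trans ((congrArg (φ ≫ ·) S.zero).trans comp_zero)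

instance (S : ShortComplex C) : (linearYonedaShortComplex A S).X₁.Additive :=
  inferInstanceAs ((linearYoneda A C).obj S.X₃).rightOp.Additive

instance (S : ShortComplex C) : (linearYonedaShortComplex A S).X₂.Additive :=
  inferInstanceAs ((linearYoneda A C).obj S.X₂).rightOp.Additive

instance (S : ShortComplex C) : (linearYonedaShortComplex A S).X₃.Additive :=
  inferInstanceAs ((linearYoneda A C).obj S.X₁).rightOp.Additive

variable {S : ShortComplex C} (hS : S.ShortExact)
include hS

lemma isExactOnProjectives_linearYonedaShortComplex :
    IsExactOnProjectives (linearYonedaShortComplex A S) := by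
  intro P hP
  have := hS.mono_f
  have := hS.epi_g
  have hHom : (((linearYonedaShortComplex A S).map ((evaluation C _).obj P)).unop).ShortExact := by
    refine ShortComplex.ShortExact.mk' ?_ ?_ ?_
    · rw [ShortComplex.moduleCat_exact_iff]
      intro (φ : P ⟶ S.X₂) (hφ : φ ≫ S.g = 0)
      exact ⟨hS.exact.lift φ hφ, hS.exact.lift_f φ hφ⟩
    · exact (ModuleCat.mono_iff_injective _).2 fun (φ : P ⟶ S.X₁) ψ h => (cancel_mono S.f).1 h
    · exact (ModuleCat.epi_iff_surjective _).2 fun (φ : P ⟶ S.X₃) =>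
        ⟨Projective.factorThru φ S.g, Projective.factorThru_comp φ S.g⟩
  exact hHom.op

variable [EnoughProjectives C]

/-- The connecting morphism `Ext^n(-, S.X₃) ⟶ Ext^{n+1}(-, S.X₁)`. -/
def extδ (n : ℕ) : (Ext A C n).flip.obj S.X₃ ⟶ (Ext A C (n + 1)).flip.obj S.X₁ :=
  NatTrans.leftOp ((isExactOnProjectives_linearYonedaShortComplex A hS).leftDerivedδ n)

lemma exact_ext_map (n : ℕ) (X : Cᵒᵖ) :
    Function.Exact (((Ext A C n).obj X).map S.f) (((Ext A C n).obj X).map S.g) :=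
  (ShortComplex.ShortExact.moduleCat_exact_iff_function_exact _).1
    (((isExactOnProjectives_linearYonedaShortComplex A hS).leftDerived_exact n X.unop).exact 3).unop

lemma exact_ext_map_extδ (n : ℕ) (X : Cᵒᵖ) :
    Function.Exact (((Ext A C n).obj X).map S.g) ((extδ A hS n).app X) :=
  (ShortComplex.ShortExact.moduleCat_exact_iff_function_exact _).1
    (((isExactOnProjectives_linearYonedaShortComplex A hS).leftDerived_exact n X.unop).exact 2).unop

lemma exact_extδ_ext_map (n : ℕ) (X : Cᵒᵖ) :
    Function.Exact ((extδ A hS n).app X) (((Ext A C (n + 1)).obj X).map S.f) :=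
  (ShortComplex.ShortExact.moduleCat_exact_iff_function_exact _).1
    (((isExactOnProjectives_linearYonedaShortComplex A hS).leftDerived_exact n X.unop).exact 1).unop

end Ext

section ExtProperties

open Limits Opposite

variable {C : Type*} [Category* C] [Abelian C] [EnoughProjectives C]

lemma subsingleton_ext_succ_of_injective {A : Type*} [Ring A] [Linear A C] (n : ℕ) (X : Cᵒᵖ)
    (E : C) [Injective E] : Subsingleton (((Ext A C (n + 1)).obj X).obj E) := by
  let P := projectiveResolution X.unop
  rw [← ModuleCat.isZero_iff_subsingleton]
  refine IsZero.of_iso ?_ (P.isoExt (R := A) (n + 1) E)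
  rw [← HomologicalComplex.exactAt_iff_isZero_homology,
    HomologicalComplex.exactAt_iff' _ n (n + 1) (n + 2) (by simp) (by simp),
    ShortComplex.moduleCat_exact_iff]
  intro (φ : P.complex.X (n + 1) ⟶ E) (hφ : P.complex.d (n + 2) (n + 1) ≫ φ = 0)
  exact ⟨(P.exact_succ n).descToInjective φ hφ, (P.exact_succ n).comp_descToInjective φ hφ⟩

variable {A : Type*} [CommRing A] [Linear A C]

lemma ext_map_smul_id (n : ℕ) (X : Cᵒᵖ) (Y : C) (a : A) :
    ((Ext A C n).obj X).map (a • 𝟙 Y) = a • 𝟙 _ := by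
  let e : 𝟭 (ModuleCat A)ᵒᵖ ⟶ 𝟭 (ModuleCat A)ᵒᵖ :=
    { app := fun N => (a • 𝟙 N.unop).op
      naturality := fun N N' φ => Quiver.Hom.unop_inj (by simp) }
  refine congrArg Quiver.Hom.unop (leftDerived_app_eq_app_of_app_eq_app e
    (α := NatTrans.rightOp ((linearYoneda A C).map (a • 𝟙 Y))) (fun Z => ?_) n X.unop)
  refine Quiver.Hom.unop_inj (ModuleCat.hom_ext (LinearMap.ext fun (φ : Z ⟶ Y) => ?_))
  exact (Linear.comp_smul _ _ _ _ _ _).trans (congrArg (a • ·) (Category.comp_id φ))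

end ExtProperties

section ExtZero

open Limits Opposite

variable (A : Type*) [Ring A] (C : Type*) [Category* C] [Abelian C] [Linear A C]

instance (Y : C) : PreservesFiniteColimits ((linearYoneda A C).obj Y).rightOp := by
  have : PreservesLimits ((linearYoneda A C).obj Y ⋙ forget (ModuleCat A)) :=
    inferInstanceAs (PreservesLimits (yoneda.obj Y))
  have : PreservesLimits ((linearYoneda A C).obj Y) :=
    preservesLimits_of_reflects_of_preserves _ (forget (ModuleCat A))
  exact preservesFiniteColimits_rightOp _

/-- The canonical isomorphism `Hom(X, Y) ≅ Ext^0(X, Y)`. -/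
def extZeroIso [EnoughProjectives C] : linearCoyoneda A C ≅ Ext A C 0 :=
  NatIso.ofComponents
    (fun X => NatIso.ofComponents
      (fun Y => (((linearYoneda A C).obj Y).rightOp.leftDerivedZeroIsoSelf.app X.unop).unop)
      fun g => congrArg (fun α => (α.app X.unop).unop)
        (leftDerived_zero_comp_fromLeftDerivedZero
          (NatTrans.rightOp ((linearYoneda A C).map g))).symm)
    fun f => NatTrans.ext (funext fun Y => congrArg Quiver.Hom.unop
      (((linearYoneda A C).obj Y).rightOp.fromLeftDerivedZero.naturality f.unop).symm)

end ExtZero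

universe v

section FilteredColimits

open Limits

variable {A : Type*} [Ring A] {J : Type*} [Category* J] [IsFiltered J]
  [PreservesColimitsOfShape J (forget (ModuleCat.{v} A))]

lemma exact_of_isColimit {F G H : J ⥤ ModuleCat.{v} A} {α : F ⟶ G} {β : G ⟶ H}
    (hαβ : ∀ j, Function.Exact (α.app j) (β.app j))
    {cF : Cocone F} {cG : Cocone G} {cH : Cocone H}
    (hF : IsColimit cF) (hG : IsColimit cG) (hH : IsColimit cH)
    {f : cF.pt ⟶ cG.pt} (hf : ∀ j, cF.ι.app j ≫ f = α.app j ≫ cG.ι.app j)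
    {g : cG.pt ⟶ cH.pt} (hg : ∀ j, cG.ι.app j ≫ g = β.app j ≫ cH.ι.app j) :
    Function.Exact f g := by
  have hf' (j x) : f (cF.ι.app j x) = cG.ι.app j (α.app j x) := ConcreteCategory.congr_hom (hf j) x
  have hg' (j y) : g (cG.ι.app j y) = cH.ι.app j (β.app j y) := ConcreteCategory.congr_hom (hg j) y
  intro t
  constructor
  · intro ht
    obtain ⟨j, y, rfl⟩ := Concrete.isColimit_exists_rep G hG t
    obtain ⟨k, u, u', h⟩ := Concrete.isColimit_exists_of_rep_eq H hH (β.app j y) (0 : H.obj j)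
      (by rw [← hg', ht, map_zero])
    have hy : β.app k (G.map u y) = 0 :=
      (ConcreteCategory.congr_hom (β.naturality u) y).trans (h.trans (map_zero _))
    obtain ⟨x, hx⟩ := (hαβ k _).1 hy
    exact ⟨cF.ι.app k x, by rw [hf', hx, ← ConcreteCategory.comp_apply, cG.w]⟩
  · rintro ⟨s, rfl⟩
    obtain ⟨j, x, rfl⟩ := Concrete.isColimit_exists_rep F hF s
    rw [hf', hg', (hαβ j).apply_apply_eq_zero, map_zero]

end FilteredColimits

/-! ### Local cohomology as a colimit -/

section LocalCohomology

open Limits Opposite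

variable (I : Ideal R) (i : ℕ)

/-- The diagram of the `Ext^i(R/I^n, M)` over `n`, whose colimit is `H^i_I(M)`. -/
abbrev localCohomologyDiagram (M : ModuleCat R) : ℕᵒᵖᵒᵖ ⥤ ModuleCat R :=
  localCohomology.diagram (localCohomology.idealPowersDiagram I) i ⋙ (evaluation _ _).obj M

/-- The cocone with point `H^i_I(M)` over the diagram of the `Ext^i(R/I^n, M)`. -/
def localCohomologyCocone (M : ModuleCat R) : Cocone (localCohomologyDiagram I i M) :=
  ((evaluation _ _).obj M).mapCocone (colimit.cocone (localCohomology.diagram _ i))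

/-- `H^i_I(M)` is the colimit of the `Ext^i(R/I^n, M)`. -/
def isColimitLocalCohomologyCocone (M : ModuleCat R) : IsColimit (localCohomologyCocone I i M) :=
  isColimitOfPreserves _ (colimit.isColimit _)

/-- The morphisms `Ext^i(R/I^n, M) ⟶ Ext^i(R/I^n, N)` induced by `f`, over all `n`. -/
abbrev localCohomologyDiagramMap {M N : ModuleCat R} (f : M ⟶ N) :
    localCohomologyDiagram I i M ⟶ localCohomologyDiagram I i N :=
  Functor.whiskerLeft (localCohomology.diagram _ i) ((evaluation _ _).map f)

lemma localCohomologyCocone_exists_rep {M : ModuleCat R} (t : (localCohomology I i).obj M) :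
    ∃ j y, (localCohomologyCocone I i M).ι.app j y = t :=
  Concrete.isColimit_exists_rep _ (isColimitLocalCohomologyCocone I i M) t

lemma localCohomologyCocone_ι_map {M N : ModuleCat R} (f : M ⟶ N) (j : ℕᵒᵖᵒᵖ) :
    (localCohomologyCocone I i M).ι.app j ≫ (localCohomology I i).map f =
      (localCohomologyDiagramMap I i f).app j ≫ (localCohomologyCocone I i N).ι.app j :=
  (((colimit.cocone (localCohomology.diagram _ i)).ι.app j).naturality f).symm

lemma localCohomology_map_smul_id (M : ModuleCat R) (a : R) :
    (localCohomology I i).map (a • 𝟙 M) = a • 𝟙 _ := by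
  refine (isColimitLocalCohomologyCocone I i M).hom_ext fun j => ?_
  rw [localCohomologyCocone_ι_map]
  refine (congrArg (· ≫ _) (ext_map_smul_id i _ M a)).trans ?_
  exact (Linear.smul_comp _ _ _ _ _ _).trans ((congrArg (a • ·) (Category.id_comp _)).trans
    ((congrArg (a • ·) (Category.comp_id _)).symm.trans (Linear.comp_smul _ _ _ _ _ _).symm))

lemma subsingleton_localCohomology_succ_of_injective (E : ModuleCat R) [Injective E] :
    Subsingleton ((localCohomology I (i + 1)).obj E) := by
  refine subsingleton_of_forall_eq 0 fun t => ?_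
  obtain ⟨j, y, rfl⟩ := localCohomologyCocone_exists_rep I (i + 1) t
  have : Subsingleton ((localCohomologyDiagram I (i + 1) E).obj j) :=
    subsingleton_ext_succ_of_injective i _ E
  exact (congrArg _ (Subsingleton.elim y 0)).trans (map_zero _)

variable {S : ShortComplex (ModuleCat R)}

lemma exact_localCohomology_map (hS : S.ShortExact) :
    Function.Exact ((localCohomology I i).map S.f) ((localCohomology I i).map S.g) :=
  exact_of_isColimit
    (α := localCohomologyDiagramMap I i S.f)
    (β := localCohomologyDiagramMap I i S.g)
    (fun _ => exact_ext_map R hS i _)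
    (isColimitLocalCohomologyCocone I i _) (isColimitLocalCohomologyCocone I i _)
    (isColimitLocalCohomologyCocone I i _)
    (localCohomologyCocone_ι_map I i _) (localCohomologyCocone_ι_map I i _)

variable (hS : S.ShortExact)

/-- The connecting morphisms `Ext^i(R/I^n, S.X₃) ⟶ Ext^{i+1}(R/I^n, S.X₁)`, over all `n`. -/
def localCohomologyDiagramδ :
    localCohomologyDiagram I i S.X₃ ⟶ localCohomologyDiagram I (i + 1) S.X₁ :=
  Functor.whiskerLeft (localCohomology.ringModIdeals (localCohomology.idealPowersDiagram I)).op
    (extδ R hS i)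

/-- The connecting morphism `H^i_I(S.X₃) ⟶ H^{i+1}_I(S.X₁)`. -/
def localCohomologyδ :
    (localCohomology I i).obj S.X₃ ⟶ (localCohomology I (i + 1)).obj S.X₁ :=
  (isColimitLocalCohomologyCocone I i S.X₃).map (localCohomologyCocone I (i + 1) S.X₁)
    (localCohomologyDiagramδ I i hS)

lemma localCohomologyCocone_ι_δ (j : ℕᵒᵖᵒᵖ) :
    (localCohomologyCocone I i S.X₃).ι.app j ≫ localCohomologyδ I i hS =
      (localCohomologyDiagramδ I i hS).app j ≫ (localCohomologyCocone I (i + 1) S.X₁).ι.app j :=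
  IsColimit.ι_map _ _ _ _

lemma exact_localCohomology_map_localCohomologyδ :
    Function.Exact ((localCohomology I i).map S.g) (localCohomologyδ I i hS) :=
  exact_of_isColimit
    (α := localCohomologyDiagramMap I i S.g) (β := localCohomologyDiagramδ I i hS)
    (fun _ => exact_ext_map_extδ R hS i _)
    (isColimitLocalCohomologyCocone I i _) (isColimitLocalCohomologyCocone I i _)
    (isColimitLocalCohomologyCocone I (i + 1) _)
    (localCohomologyCocone_ι_map I i _) (localCohomologyCocone_ι_δ I i hS)

lemma exact_localCohomologyδ_localCohomology_map :
    Function.Exact (localCohomologyδ I i hS) ((localCohomology I (i + 1)).map S.f) :=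
  exact_of_isColimit
    (α := localCohomologyDiagramδ I i hS) (β := localCohomologyDiagramMap I (i + 1) S.f)
    (fun _ => exact_extδ_ext_map R hS i _)
    (isColimitLocalCohomologyCocone I i _) (isColimitLocalCohomologyCocone I (i + 1) _)
    (isColimitLocalCohomologyCocone I (i + 1) _)
    (localCohomologyCocone_ι_δ I i hS) (localCohomologyCocone_ι_map I (i + 1) _)

end LocalCohomology

/-! ### `I`-torsion modules and `H^0_I` -/

section IdealTorsion

/-- The submodule `Γ_I(M)` of the elements annihilated by a power of `I`. -/
def idealTorsion (I : Ideal R) (M : Type*) [AddCommGroup M] [Module R M] : Submodule R M :=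
  ⨆ n : ℕ, Submodule.torsionBySet R M (I ^ n : Ideal R)

/-- A module is `I`-torsion if each of its elements is annihilated by a power of `I`. -/
def IsIdealTorsion (I : Ideal R) (M : Type*) [AddCommGroup M] [Module R M] : Prop :=
  ∀ m : M, ∃ n : ℕ, ∀ a ∈ I ^ n, a • m = 0

variable {I : Ideal R} {M N : Type*} [AddCommGroup M] [Module R M] [AddCommGroup N] [Module R N]

lemma mem_idealTorsion {m : M} : m ∈ idealTorsion I M ↔ ∃ n : ℕ, ∀ a ∈ I ^ n, a • m = 0 := by
  have hmono : Monotone fun n : ℕ => Submodule.torsionBySet R M (I ^ n : Ideal R) := fun _ _ h =>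
    Submodule.torsionBySet_le_torsionBySet_of_subset (Ideal.pow_le_pow_right h)
  rw [idealTorsion, Submodule.mem_iSup_of_directed _ hmono.directed_le]
  exact exists_congr fun n => ⟨fun h a ha => (Submodule.mem_torsionBySet_iff _ _).1 h ⟨a, ha⟩,
    fun h => (Submodule.mem_torsionBySet_iff _ _).2 fun a => h a a.2⟩

lemma isIdealTorsion_idealTorsion (I : Ideal R) (M : Type*) [AddCommGroup M] [Module R M] :
    IsIdealTorsion I (idealTorsion I M) := fun m =>
  let ⟨n, hn⟩ := mem_idealTorsion.1 m.2
  ⟨n, fun a ha => Subtype.ext (hn a ha)⟩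

lemma IsIdealTorsion.of_injective (hN : IsIdealTorsion I N) {f : M →ₗ[R] N}
    (hf : Function.Injective f) : IsIdealTorsion I M := fun m =>
  let ⟨n, hn⟩ := hN (f m)
  ⟨n, fun a ha => hf (by rw [map_smul, hn a ha, map_zero])⟩

lemma IsIdealTorsion.of_surjective (hM : IsIdealTorsion I M) {f : M →ₗ[R] N}
    (hf : Function.Surjective f) : IsIdealTorsion I N := fun y => by
  obtain ⟨x, rfl⟩ := hf y
  obtain ⟨n, hn⟩ := hM x
  exact ⟨n, fun a ha => by rw [← map_smul, hn a ha, map_zero]⟩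

end IdealTorsion

section TorsionInjective

variable {I : Ideal R} {M N : Type*} [AddCommGroup M] [Module R M] [AddCommGroup N] [Module R N]

lemma IsIdealTorsion.exists_pow_le_annihilator [Module.Finite R M] (hM : IsIdealTorsion I M) :
    ∃ n : ℕ, I ^ n ≤ Module.annihilator R M := by
  obtain ⟨s, hs⟩ := Module.Finite.fg_top (R := R) (M := M)
  choose n hn using hM
  refine ⟨s.sup n, fun a ha => ?_⟩
  rw [← Submodule.annihilator_top, ← hs]
  exact (Submodule.mem_annihilator_span _ _).2 fun x =>
    hn x a (Ideal.pow_le_pow_right (Finset.le_sup (f := n) x.2) ha)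

lemma IsIdealTorsion.apply_mem_idealTorsion (hM : IsIdealTorsion I M) (f : M →ₗ[R] N) (m : M) :
    f m ∈ idealTorsion I N :=
  let ⟨n, hn⟩ := hM m
  mem_idealTorsion.2 ⟨n, fun a ha => by rw [← map_smul, hn a ha, map_zero]⟩

lemma isIdealTorsion_quotient_pow_smul_top (I : Ideal R) (n : ℕ) :
    IsIdealTorsion I (M ⧸ I ^ n • (⊤ : Submodule R M)) := fun x => by
  obtain ⟨m, rfl⟩ := Submodule.mkQ_surjective _ x
  exact ⟨n, fun a ha => (Submodule.Quotient.mk_eq_zero _).2 (Submodule.smul_mem_smul ha trivial)⟩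

lemma exists_comp_eq_of_ker_le {P : Type*} [AddCommGroup P] [Module R P]
    {E : Type*} [AddCommGroup E] [Module R E] [Module.Injective R E]
    {f : P →ₗ[R] M} {g : P →ₗ[R] E} (h : LinearMap.ker f ≤ LinearMap.ker g) :
    ∃ k : M →ₗ[R] E, k ∘ₗ f = g := by
  obtain ⟨k, hk⟩ := Module.Injective.extension_property R E _ _
    ((LinearMap.ker f).liftQ f le_rfl)
    (LinearMap.ker_eq_bot.1 (Submodule.ker_liftQ_eq_bot' _ f rfl)) ((LinearMap.ker f).liftQ g h)
  exact ⟨k, LinearMap.ext fun x => LinearMap.congr_fun hk (Submodule.Quotient.mk x)⟩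

lemma exists_linearMap_injective_object (N : Type) [AddCommGroup N] [Module R N] :
    ∃ E : ModuleCat.{0} R, Injective E ∧ ∃ f : N →ₗ[R] E, Function.Injective f :=
  ⟨Injective.under (ModuleCat.of R N), inferInstance, (Injective.ι (ModuleCat.of R N)).hom,
    (ModuleCat.mono_iff_injective _).1 inferInstance⟩

variable [IsNoetherianRing R]

-- By Artin–Rees, `I ^ (n + k) • M ∩ P ⊆ I ^ n • P`, and `g` vanishes on the latter.
lemma IsIdealTorsion.exists_ker_le_ker [Module.Finite R M] (hN : IsIdealTorsion I N)
    {P : Submodule R M} (g : P →ₗ[R] N) :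
    ∃ n : ℕ, LinearMap.ker ((I ^ n • (⊤ : Submodule R M)).mkQ ∘ₗ P.subtype) ≤
      LinearMap.ker g := by
  have hrange : IsIdealTorsion I (LinearMap.range g) :=
    hN.of_injective (LinearMap.range g).injective_subtype
  obtain ⟨n, hn⟩ := hrange.exists_pow_le_annihilator
  obtain ⟨k, hk⟩ := I.exists_pow_inf_eq_pow_smul P
  refine ⟨n + k, fun x hx => ?_⟩
  have hAR : (x : M) ∈ I ^ n • P := by
    have hx' : (x : M) ∈ I ^ (n + k) • ⊤ ⊓ P := ⟨(Submodule.Quotient.mk_eq_zero _).1 hx, x.2⟩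
    rw [hk _ (Nat.le_add_left k n), Nat.add_sub_cancel] at hx'
    exact Submodule.smul_mono le_rfl inf_le_right hx'
  have hker : I ^ n • P ≤ (LinearMap.ker g).map P.subtype := by
    refine Submodule.smul_le.2 fun a ha y hy => ⟨a • ⟨y, hy⟩, ?_, rfl⟩
    exact (map_smul g a _).trans
      (congrArg Subtype.val (Module.mem_annihilator.1 (hn ha) ⟨g ⟨y, hy⟩, _, rfl⟩))
  obtain ⟨y, hy, hyx⟩ := hker hAR
  rwa [← Subtype.ext hyx]

lemma injective_idealTorsion (I : Ideal R) (E : Type*) [AddCommGroup E] [Module R E]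
    [Module.Injective R E] : Module.Injective R (idealTorsion I E) := by
  refine Module.Baer.injective fun J g => ?_
  obtain ⟨n, hn⟩ := (isIdealTorsion_idealTorsion I E).exists_ker_le_ker g
  obtain ⟨h, hh⟩ := exists_comp_eq_of_ker_le (hn.trans (LinearMap.ker_le_ker_comp g
    (idealTorsion I E).subtype))
  have hmem := (isIdealTorsion_quotient_pow_smul_top I n).apply_mem_idealTorsion h
  exact ⟨(h.codRestrict _ hmem) ∘ₗ Submodule.mkQ _,
    fun x hx => Subtype.ext (LinearMap.congr_fun hh ⟨x, hx⟩)⟩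

lemma IsIdealTorsion.exists_linearMap_isIdealTorsion_injective {N : Type} [AddCommGroup N]
    [Module R N] (hN : IsIdealTorsion I N) :
    ∃ E : ModuleCat.{0} R, Injective E ∧ IsIdealTorsion I E ∧
      ∃ f : N →ₗ[R] E, Function.Injective f := by
  obtain ⟨E, hE, f, hf⟩ := exists_linearMap_injective_object (R := R) N
  have : Module.Injective R E := (Module.injective_iff_injective_object R E).2 hE
  refine ⟨ModuleCat.of R (idealTorsion I E),
    (Module.injective_iff_injective_object R _).1 (injective_idealTorsion I E),
    isIdealTorsion_idealTorsion I E, f.codRestrict _ (hN.apply_mem_idealTorsion f), ?_⟩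
  exact fun x y h => hf (congrArg Subtype.val h)

end TorsionInjective

section LocalCohomologyZero

open Limits Opposite

variable (I : Ideal R)

/-- The diagram of the `Hom(R/I^n, M)` over `n`. -/
abbrev homDiagram (M : ModuleCat R) : ℕᵒᵖᵒᵖ ⥤ ModuleCat R :=
  ((localCohomology.ringModIdeals (localCohomology.idealPowersDiagram I)).op ⋙
    linearCoyoneda R (ModuleCat R)) ⋙ (evaluation _ _).obj M

/-- The isomorphisms `Hom(R/I^n, M) ≅ Ext^0(R/I^n, M)`, over all `n`. -/
def homDiagramIso (M : ModuleCat R) : homDiagram I M ≅ localCohomologyDiagram I 0 M :=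
  Functor.isoWhiskerRight (Functor.isoWhiskerLeft _ (extZeroIso R (ModuleCat R))) _

/-- The cocone of the evaluations `Hom(R/I^n, M) ⟶ M` at `1`. -/
def evalOneCocone (M : ModuleCat R) : Cocone (homDiagram I M) where
  pt := M
  ι :=
    { app := fun j => ModuleCat.ofHom
        { toFun := fun f : ModuleCat.of R (R ⧸ I ^ j.unop.unop) ⟶ M =>
            f.hom (Submodule.Quotient.mk 1)
          map_add' := fun _ _ => rfl
          map_smul' := fun _ _ => rfl }
      naturality := fun _ _ _ => rfl }

/-- The canonical map `H^0_I(M) ⟶ M`. -/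
def localCohomologyZeroMap (M : ModuleCat R) : (localCohomology I 0).obj M ⟶ M :=
  (isColimitLocalCohomologyCocone I 0 M).desc
    ((Cocone.precompose (homDiagramIso I M).inv).obj (evalOneCocone I M))

variable {I}

lemma exists_homDiagram_rep {M : ModuleCat R} (t : (localCohomology I 0).obj M) :
    ∃ (n : ℕ) (f : ModuleCat.of R (R ⧸ I ^ n) ⟶ M),
      (localCohomologyCocone I 0 M).ι.app (op (op n))
        ((homDiagramIso I M).hom.app (op (op n)) f) = t := by
  obtain ⟨j, y, rfl⟩ := localCohomologyCocone_exists_rep I 0 t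
  exact ⟨j.unop.unop, (homDiagramIso I M).inv.app j y, congrArg _
    (ConcreteCategory.congr_hom ((homDiagramIso I M).inv_hom_id_app j) y)⟩

lemma localCohomologyZeroMap_ι {M : ModuleCat R} (n : ℕ)
    (f : ModuleCat.of R (R ⧸ I ^ n) ⟶ M) :
    localCohomologyZeroMap I M ((localCohomologyCocone I 0 M).ι.app (op (op n))
      ((homDiagramIso I M).hom.app (op (op n)) f)) = f.hom (Submodule.Quotient.mk 1) :=
  (ConcreteCategory.congr_hom ((isColimitLocalCohomologyCocone I 0 M).fac _ (op (op n))) _).trans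
    (congrArg ((evalOneCocone I M).ι.app (op (op n)))
      (ConcreteCategory.congr_hom ((homDiagramIso I M).hom_inv_id_app (op (op n))) f))

lemma localCohomologyZeroMap_naturality {M N : ModuleCat R} (g : M ⟶ N)
    (t : (localCohomology I 0).obj M) :
    localCohomologyZeroMap I N ((localCohomology I 0).map g t) =
      g (localCohomologyZeroMap I M t) := by
  obtain ⟨n, f, rfl⟩ := exists_homDiagram_rep t
  have hmap : (homDiagramIso I M).hom.app (op (op n)) ≫
      (localCohomologyDiagramMap I 0 g).app (op (op n)) =
        ((linearCoyoneda R _).obj _).map g ≫ (homDiagramIso I N).hom.app (op (op n)) :=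
    (((extZeroIso R (ModuleCat R)).hom.app _).naturality g).symm
  have hι := ConcreteCategory.congr_hom (localCohomologyCocone_ι_map I 0 g (op (op n)))
    ((homDiagramIso I M).hom.app (op (op n)) f)
  have hf := congrArg ((localCohomologyCocone I 0 N).ι.app (op (op n)))
    (ConcreteCategory.congr_hom hmap f)
  rw [localCohomologyZeroMap_ι]
  exact (congrArg _ (hι.trans hf)).trans (localCohomologyZeroMap_ι n (f ≫ g))

lemma localCohomologyZeroMap_injective (M : ModuleCat R) :
    Function.Injective (localCohomologyZeroMap I M) := by
  refine (injective_iff_map_eq_zero _).2 fun t ht => ?_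
  obtain ⟨n, f, rfl⟩ := exists_homDiagram_rep t
  rw [localCohomologyZeroMap_ι] at ht
  have hf : f = 0 := ModuleCat.hom_ext (Submodule.linearMap_qext _ (LinearMap.ext_ring ht))
  rw [hf]
  exact (congrArg _ (map_zero _)).trans (map_zero _)

lemma range_localCohomologyZeroMap (M : ModuleCat R) :
    LinearMap.range (localCohomologyZeroMap I M).hom = idealTorsion I M := by
  ext m
  rw [mem_idealTorsion]
  constructor
  · rintro ⟨t, rfl⟩
    obtain ⟨n, f, rfl⟩ := exists_homDiagram_rep t
    refine ⟨n, fun a ha => ?_⟩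
    have ha' : a • (Submodule.Quotient.mk 1 : R ⧸ I ^ n) = 0 := by
      rwa [← Submodule.Quotient.mk_smul, smul_eq_mul, mul_one, Submodule.Quotient.mk_eq_zero]
    refine (congrArg (a • ·) (localCohomologyZeroMap_ι n f)).trans ?_
    exact (f.hom.map_smul a _).symm.trans ((congrArg f.hom ha').trans (map_zero _))
  · rintro ⟨n, hn⟩
    let f : R ⧸ I ^ n →ₗ[R] M := Submodule.liftQ _ (LinearMap.toSpanSingleton R M m) hn
    exact ⟨_, (localCohomologyZeroMap_ι n (ModuleCat.ofHom f)).trans (one_smul R m)⟩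

end LocalCohomologyZero

/-! ### Exact sequences of local cohomology modules -/

section LocH

variable (I : Ideal R) (i : ℕ) {M N P : Type} [AddCommGroup M] [Module R M] [AddCommGroup N]
  [Module R N] [AddCommGroup P] [Module R P]

/-- The linear map `H^i_I(M) → H^i_I(N)` induced by `f`. -/
def locHMap (f : M →ₗ[R] N) : locH I i M →ₗ[R] locH I i N :=
  ((localCohomology I i).map (ModuleCat.ofHom f)).hom

lemma locHMap_comp (f : M →ₗ[R] N) (g : N →ₗ[R] P) :
    locHMap I i (g ∘ₗ f) = locHMap I i g ∘ₗ locHMap I i f :=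
  congrArg ModuleCat.Hom.hom
    ((localCohomology I i).map_comp (ModuleCat.ofHom f) (ModuleCat.ofHom g))

lemma locHMap_lsmul (a : R) : locHMap I i (LinearMap.lsmul R M a) = LinearMap.lsmul R _ a :=
  congrArg ModuleCat.Hom.hom (localCohomology_map_smul_id I i (ModuleCat.of R M) a)

lemma shortExact_of_linearMap_exact {f : M →ₗ[R] N} {g : N →ₗ[R] P} (hf : Function.Injective f)
    (hg : Function.Surjective g) (h : Function.Exact f g) :
    (ShortComplex.mk (ModuleCat.ofHom f) (ModuleCat.ofHom g)
      (ModuleCat.hom_ext h.linearMap_comp_eq_zero)).ShortExact :=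
  .mk' ((ShortComplex.ShortExact.moduleCat_exact_iff_function_exact _).2 h)
    ((ModuleCat.mono_iff_injective _).2 hf) ((ModuleCat.epi_iff_surjective _).2 hg)

lemma exact_locHMap {f : M →ₗ[R] N} {g : N →ₗ[R] P} (hf : Function.Injective f)
    (hg : Function.Surjective g) (h : Function.Exact f g) :
    Function.Exact (locHMap I i f) (locHMap I i g) :=
  exact_localCohomology_map I i (shortExact_of_linearMap_exact hf hg h)

lemma exists_locH_connecting {f : M →ₗ[R] N} {g : N →ₗ[R] P} (hf : Function.Injective f)
    (hg : Function.Surjective g) (h : Function.Exact f g) :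
    ∃ δ : locH I i P →ₗ[R] locH I (i + 1) M,
      Function.Exact (locHMap I i g) δ ∧ Function.Exact δ (locHMap I (i + 1) f) :=
  have hS := shortExact_of_linearMap_exact hf hg h
  ⟨(localCohomologyδ I i hS).hom, exact_localCohomology_map_localCohomologyδ I i hS,
    exact_localCohomologyδ_localCohomology_map I i hS⟩

lemma isIdealTorsion_locH (M : Type) [AddCommGroup M] [Module R M] :
    IsIdealTorsion I (locH I i M) := by
  induction i generalizing M with
  | zero =>
    let γ := (localCohomologyZeroMap I (ModuleCat.of R M)).hom
    have hγ : LinearMap.range γ = idealTorsion I M := range_localCohomologyZeroMap _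
    exact (isIdealTorsion_idealTorsion I M).of_injective
      (f := γ.codRestrict _ fun t => hγ ▸ LinearMap.mem_range_self γ t)
      fun s t h => localCohomologyZeroMap_injective _ (congrArg Subtype.val h)
  | succ i ih =>
    obtain ⟨E, _, f, hf⟩ := exists_linearMap_injective_object (R := R) M
    obtain ⟨δ, -, hδ⟩ := exists_locH_connecting I i hf (Submodule.mkQ_surjective _)
      (LinearMap.exact_map_mkQ_range f)
    have : Subsingleton (locH I (i + 1) E) := subsingleton_localCohomology_succ_of_injective I i E
    exact (ih _).of_surjective fun t => (hδ t).1 (Subsingleton.elim _ _)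

variable {I}

lemma IsIdealTorsion.locHMap_zero_surjective (hM : IsIdealTorsion I M) {f : M →ₗ[R] N}
    (hf : Function.Surjective f) : Function.Surjective (locHMap I 0 f) := fun t => by
  obtain ⟨m, hm⟩ := hf (localCohomologyZeroMap I (ModuleCat.of R N) t)
  obtain ⟨s, hs⟩ : m ∈ LinearMap.range (localCohomologyZeroMap I (ModuleCat.of R M)).hom :=
    range_localCohomologyZeroMap (I := I) (ModuleCat.of R M) ▸ mem_idealTorsion.2 (hM m)
  refine ⟨s, localCohomologyZeroMap_injective _ ?_⟩
  exact (localCohomologyZeroMap_naturality (ModuleCat.ofHom f) s).trans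
    ((congrArg f hs).trans hm)

variable [IsNoetherianRing R]

-- Embed `N` into an `I`-torsion injective module and shift dimensions.
lemma IsIdealTorsion.subsingleton_locH_succ {N : Type} [AddCommGroup N] [Module R N]
    (hN : IsIdealTorsion I N) : Subsingleton (locH I (i + 1) N) := by
  induction i generalizing N with
  | zero =>
    obtain ⟨E, _, hEtor, f, hf⟩ := hN.exists_linearMap_isIdealTorsion_injective
    obtain ⟨δ, hπδ, hδ⟩ := exists_locH_connecting I 0 hf (Submodule.mkQ_surjective _)
      (LinearMap.exact_map_mkQ_range f)
    have : Subsingleton (locH I 1 E) := subsingleton_localCohomology_succ_of_injective I 0 E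
    have hπ := hEtor.locHMap_zero_surjective (Submodule.mkQ_surjective (LinearMap.range f))
    refine subsingleton_of_forall_eq 0 fun t => ?_
    obtain ⟨s, rfl⟩ := (hδ t).1 (Subsingleton.elim _ _)
    exact (hπδ s).2 (hπ s)
  | succ i ih =>
    obtain ⟨E, _, hEtor, f, hf⟩ := hN.exists_linearMap_isIdealTorsion_injective
    obtain ⟨δ, -, hδ⟩ := exists_locH_connecting I (i + 1) hf (Submodule.mkQ_surjective _)
      (LinearMap.exact_map_mkQ_range f)
    have : Subsingleton (locH I (i + 1 + 1) E) :=
      subsingleton_localCohomology_succ_of_injective I (i + 1) E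
    have := ih (hEtor.of_surjective (Submodule.mkQ_surjective (LinearMap.range f)))
    exact Function.Surjective.subsingleton fun t => (hδ t).1 (Subsingleton.elim _ _)

lemma bijective_locHMap_succ_of_isIdealTorsion_ker {f : M →ₗ[R] N} (hf : Function.Surjective f)
    (hker : IsIdealTorsion I (LinearMap.ker f)) : Function.Bijective (locHMap I (i + 1) f) := by
  have hinj := (LinearMap.ker f).injective_subtype
  have hexact := LinearMap.exact_subtype_ker_map f
  have := hker.subsingleton_locH_succ i
  have := hker.subsingleton_locH_succ (i + 1)
  constructor
  · refine (injective_iff_map_eq_zero _).2 fun t ht => ?_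
    obtain ⟨s, rfl⟩ := (exact_locHMap I (i + 1) hinj hf hexact t).1 ht
    rw [Subsingleton.elim s 0, map_zero]
  · obtain ⟨δ, hδ, -⟩ := exists_locH_connecting I (i + 1) hinj hf hexact
    exact fun t => (hδ t).1 (Subsingleton.elim _ _)

end LocH

section QuotSMulTop

open scoped Pointwise

variable [IsNoetherianRing R] {I : Ideal R} {M : Type} [AddCommGroup M] [Module R M] {z : R}

lemma exists_locH_quotSMulTop_connecting (hz : ∀ m : M, z • m = 0 → ∀ a ∈ I, a • m = 0) (i : ℕ) :
    ∃ δ : locH I i (QuotSMulTop z M) →ₗ[R] locH I (i + 1) M,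
      Function.Exact δ (LinearMap.lsmul R (locH I (i + 1) M) z) ∧
      Function.Exact (LinearMap.lsmul R (locH I (i + 1) M) z)
        (locHMap I (i + 1) (z • (⊤ : Submodule R M)).mkQ) := by
  let p : M →ₗ[R] (z • (⊤ : Submodule R M) : Submodule R M) :=
    (LinearMap.lsmul R M z).codRestrict _ fun m => Submodule.smul_mem_pointwise_smul m z ⊤ trivial
  have hp : Function.Surjective p := fun ⟨_, m, _, hm⟩ => ⟨m, Subtype.ext hm⟩
  have hker : IsIdealTorsion I (LinearMap.ker p) := fun m =>
    ⟨1, fun a ha => Subtype.ext (hz m (congrArg Subtype.val m.2) a (pow_one I ▸ ha))⟩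
  let e := LinearEquiv.ofBijective _ (bijective_locHMap_succ_of_isIdealTorsion_ker i hp hker)
  have hfactor : LinearMap.lsmul R (locH I (i + 1) M) z =
      locHMap I (i + 1) (z • (⊤ : Submodule R M)).subtype ∘ₗ e.toLinearMap :=
    (locHMap_lsmul I (i + 1) z).symm.trans (locHMap_comp I (i + 1) p (Submodule.subtype _))
  have hinj := (z • (⊤ : Submodule R M)).injective_subtype
  have hexact := LinearMap.exact_subtype_mkQ (z • (⊤ : Submodule R M))
  obtain ⟨δ, -, hδ⟩ := exists_locH_connecting I i hinj (Submodule.mkQ_surjective _) hexact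
  refine ⟨e.symm.toLinearMap ∘ₗ δ, ?_, ?_⟩
  · rw [hfactor]
    exact (LinearEquiv.conj_exact_iff_exact δ _ e.symm).2 hδ
  · rw [hfactor]
    exact e.surjective.comp_exact_iff_exact.2
      (exact_locHMap I (i + 1) hinj (Submodule.mkQ_surjective _) hexact)

end QuotSMulTop

/-! ### Weak sequences and systems of parameters -/

section WeakSequences

variable {I : Ideal R} {M : Type} [AddCommGroup M] [Module R M] {r : ℕ}

lemma IsIdealTorsion.subsingleton_of_isSMulRegular (hM : IsIdealTorsion I M) {a : R} (ha : a ∈ I)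
    (hreg : IsSMulRegular M a) : Subsingleton M :=
  subsingleton_of_forall_eq 0 fun m => by
    obtain ⟨n, hn⟩ := hM m
    exact (hreg.pow n).right_eq_zero_of_smul (hn _ (Ideal.pow_mem_pow ha n))

lemma pSpan_zero (x : Fin (r + 1) → R) : pSpan M x 0 = ⊥ := by
  have hempty : {j : Fin (r + 1) | j < 0} = ∅ := by ext j; simp
  rw [pSpan, hempty, Set.image_empty, Ideal.span_empty, Submodule.bot_smul]

lemma image_setOf_lt_succ {α : Type*} (x : Fin (r + 1) → α) (i : Fin r) :
    x '' {j | j < i.succ} = insert (x 0) (Fin.tail x '' {j | j < i}) := by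
  ext a
  simp [Fin.exists_fin_succ, Fin.tail, eq_comm]

lemma comap_mkQ_pSpan_tail (x : Fin (r + 1) → R) (i : Fin r) :
    (pSpan (QuotSMulTop (x 0) M) (Fin.tail x) i).comap (Submodule.mkQ _) = pSpan M x i.succ := by
  have hmap : pSpan (QuotSMulTop (x 0) M) (Fin.tail x) i =
      (Ideal.span (Fin.tail x '' {j | j < i}) • (⊤ : Submodule R M)).map (Submodule.mkQ _) := by
    rw [Submodule.map_smul'', Submodule.map_top, Submodule.range_mkQ, pSpan]
  rw [hmap, Submodule.comap_map_eq, Submodule.ker_mkQ, pSpan, image_setOf_lt_succ,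
    Ideal.span_insert, Submodule.sup_smul, Submodule.ideal_span_singleton_smul, sup_comm]

lemma IsWeakSeq.smul_eq_zero {x : Fin (r + 1) → R} (h : IsWeakSeq I M x) {m : M}
    (hm : x 0 • m = 0) {a : R} (ha : a ∈ I) : a • m = 0 := by
  have h0 := h 0 m
  rw [pSpan_zero] at h0
  exact h0 hm a ha

lemma IsWeakSeq.quotSMulTop {x : Fin (r + 1) → R} (h : IsWeakSeq I M x) :
    IsWeakSeq I (QuotSMulTop (x 0) M) (Fin.tail x) := by
  intro i q hq a ha
  obtain ⟨m, rfl⟩ := Submodule.mkQ_surjective _ q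
  rw [← map_smul, ← Submodule.mem_comap, comap_mkQ_pSpan_tail]
  refine h i.succ m ?_ a ha
  rwa [← comap_mkQ_pSpan_tail, Submodule.mem_comap, map_smul]

/-- Every sequence `x_1^{α_1}, …, x_r^{α_r}` of positive powers, in the given order, is an `I`-weak
sequence on `M`. Unlike for `IsUncondWeakSeq`, the order is fixed, so the condition descends to
`M / x_1^n M` and `x_2, …, x_r`. -/
def IsPowWeakSeq (I : Ideal R) (M : Type) [AddCommGroup M] [Module R M] (x : Fin r → R) : Prop :=
  ∀ α : Fin r → ℕ, (∀ k, 0 < α k) → IsWeakSeq I M fun k => x k ^ α k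

lemma IsPowWeakSeq.isWeakSeq {x : Fin r → R} (h : IsPowWeakSeq I M x) : IsWeakSeq I M x := by
  simpa only [pow_one] using h (fun _ => 1) fun _ => one_pos

lemma IsPowWeakSeq.quotSMulTop {x : Fin (r + 1) → R} (h : IsPowWeakSeq I M x) {n : ℕ}
    (hn : 0 < n) : IsPowWeakSeq I (QuotSMulTop (x 0 ^ n) M) (Fin.tail x) := fun β hβ =>
  (h (Fin.cons n β) (Fin.cases hn hβ)).quotSMulTop

lemma IsPowWeakSeq.smul_eq_zero {x : Fin (r + 1) → R} (h : IsPowWeakSeq I M x) {n : ℕ}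
    (hn : 0 < n) {m : M} (hm : x 0 ^ n • m = 0) {a : R} (ha : a ∈ I) : a • m = 0 :=
  (h (fun _ => n) fun _ => hn).smul_eq_zero hm ha

lemma le_radical_span_tail_sup_annihilator_quotSMulTop {x : Fin (r + 1) → R}
    (hI : I ≤ (Ideal.span (Set.range x) ⊔ Module.annihilator R M).radical) :
    I ≤ (Ideal.span (Set.range (Fin.tail x)) ⊔
      Module.annihilator R (QuotSMulTop (x 0) M)).radical := by
  refine hI.trans (Ideal.radical_mono (sup_le (Ideal.span_le.2 ?_) ?_))
  · rintro _ ⟨j, rfl⟩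
    cases j using Fin.cases with
    | zero => exact Ideal.mem_sup_right (QuotSMulTop.mem_annihilator M (x 0))
    | succ j => exact Ideal.mem_sup_left (Ideal.subset_span ⟨j, rfl⟩)
  · exact le_sup_of_le_right (LinearMap.annihilator_le_of_surjective _ (Submodule.mkQ_surjective _))

variable [IsNoetherianRing R]

lemma IsPowWeakSeq.smul_locH_eq_zero {x : Fin r → R} (hx : ∀ k, x k ∈ I)
    (h : IsPowWeakSeq I M x) {i : ℕ} (hi : i < r) {a : R} (ha : a ∈ I) (t : locH I i M) :
    a • t = 0 := by
  induction r generalizing M i with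
  | zero => exact absurd hi i.not_lt_zero
  | succ r ih =>
    obtain ⟨n, hn⟩ := isIdealTorsion_locH I i M t
    have hnt : x 0 ^ (n + 1) • t = 0 := by
      rw [pow_succ', mul_smul, hn _ (Ideal.pow_mem_pow (hx 0) n), smul_zero]
    cases i with
    | zero =>
      let γ := (localCohomologyZeroMap I (ModuleCat.of R M)).hom
      refine localCohomologyZeroMap_injective _ ((map_smul γ a t).trans ?_)
      rw [map_zero]
      refine h.smul_eq_zero n.succ_pos ?_ ha
      exact (map_smul γ (x 0 ^ (n + 1)) t).symm.trans ((congrArg γ hnt).trans (map_zero γ))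
    | succ i =>
      obtain ⟨δ, hδ, -⟩ := exists_locH_quotSMulTop_connecting
        (fun m hm b hb => h.smul_eq_zero n.succ_pos (m := m) hm hb) i
      obtain ⟨s, rfl⟩ := (hδ t).1 hnt
      rw [← map_smul, ih (fun k => hx k.succ) (h.quotSMulTop n.succ_pos)
        (Nat.lt_of_succ_lt_succ hi), map_zero]

lemma IsPowWeakSeq.finite_locH [Module.Finite R M] {x : Fin r → R} (hx : ∀ k, x k ∈ I)
    (h : IsPowWeakSeq I M x) {i : ℕ} (hi : i < r) : Module.Finite R (locH I i M) := by
  induction r generalizing M i with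
  | zero => exact absurd hi i.not_lt_zero
  | succ r ih =>
    cases i with
    | zero =>
      exact Module.Finite.of_injective (N := M) (localCohomologyZeroMap I (ModuleCat.of R M)).hom
        (localCohomologyZeroMap_injective _)
    | succ i =>
      obtain ⟨δ, hδ, -⟩ := exists_locH_quotSMulTop_connecting
        (fun m hm b hb => h.smul_eq_zero one_pos (m := m) hm hb) i
      have := ih (fun k => hx k.succ) (h.quotSMulTop one_pos) (Nat.lt_of_succ_lt_succ hi)
      refine .of_surjective δ fun t => (hδ t).1 ?_
      exact h.smul_locH_eq_zero hx hi (Ideal.pow_mem_of_mem _ (hx 0) 1 one_pos) t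

lemma IsWeakSeq.subsingleton_locH {x : Fin r → R} (hx : ∀ k, x k ∈ I) (h : IsWeakSeq I M x)
    (hI : I ≤ (Ideal.span (Set.range x) ⊔ Module.annihilator R M).radical) {i : ℕ} (hi : r < i) :
    Subsingleton (locH I i M) := by
  obtain ⟨i, rfl⟩ := Nat.exists_eq_succ_of_ne_zero (Nat.ne_zero_of_lt hi)
  induction r generalizing M i with
  | zero =>
    rw [Set.range_eq_empty, Ideal.span_empty, bot_sup_eq] at hI
    obtain ⟨n, hn⟩ := Ideal.exists_pow_le_of_le_radical_of_fg hI (IsNoetherian.noetherian I)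
    have hM : IsIdealTorsion I M := fun m => ⟨n, fun a ha => Module.mem_annihilator.1 (hn ha) m⟩
    exact hM.subsingleton_locH_succ i
  | succ r ih =>
    obtain ⟨i, rfl⟩ := Nat.exists_eq_succ_of_ne_zero (Nat.ne_zero_of_lt (Nat.lt_of_succ_lt_succ hi))
    have := ih (fun k => hx k.succ) h.quotSMulTop
      (le_radical_span_tail_sup_annihilator_quotSMulTop hI) i (Nat.lt_of_succ_lt_succ hi)
    obtain ⟨δ, hδ, -⟩ := exists_locH_quotSMulTop_connecting
      (fun m hm a ha => h.smul_eq_zero (m := m) hm ha) (i + 1)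
    refine (isIdealTorsion_locH I _ M).subsingleton_of_isSMulRegular (hx 0)
      (.of_right_eq_zero_of_smul fun t ht => ?_)
    obtain ⟨s, rfl⟩ := (hδ t).1 ht
    rw [Subsingleton.elim s 0, map_zero]

lemma IsWeakSeq.not_finite_locH {x : Fin (r + 1) → R} (hx : ∀ k, x k ∈ I) (h : IsWeakSeq I M x)
    (hI : I ≤ (Ideal.span (Set.range x) ⊔ Module.annihilator R M).radical)
    [Nontrivial (locH I (r + 1) M)] : ¬ Module.Finite R (locH I (r + 1) M) := by
  intro hfin
  have := h.quotSMulTop.subsingleton_locH (fun k => hx k.succ)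
    (le_radical_span_tail_sup_annihilator_quotSMulTop hI) r.lt_succ_self
  obtain ⟨-, -, hexact⟩ := exists_locH_quotSMulTop_connecting
    (fun m hm a ha => h.smul_eq_zero (m := m) hm ha) r
  have hsurj : Function.Surjective (LinearMap.lsmul R (locH I (r + 1) M) (x 0)) :=
    fun t => (hexact t).1 (Subsingleton.elim _ _)
  have hinj := OrzechProperty.injective_of_surjective_endomorphism _ hsurj
  exact not_subsingleton _
    ((isIdealTorsion_locH I (r + 1) M).subsingleton_of_isSMulRegular (hx 0) hinj)

end WeakSequences

section SystemsOfParameters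

variable {I : Ideal R} {M : Type} [AddCommGroup M] [Module R M] {c : ℕ}

lemma IsRsop.le_radical {x : Fin c → R} (h : IsRsop I M x) :
    I ≤ (Ideal.span (Set.range x) ⊔ Module.annihilator R M).radical :=
  le_sup_left.trans (Ideal.le_radical.trans h.2.ge)

lemma isRsop_of_le_radical {x y : Fin c → R}
    (hx : (Ideal.span (Set.range x) + Module.annihilator R M).radical
      = (I + Module.annihilator R M).radical) (hy : ∀ k, y k ∈ I)
    (hxy : ∀ k, x k ∈ (Ideal.span (Set.range y) + Module.annihilator R M).radical) :
    IsRsop I M y := by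
  refine ⟨hy, le_antisymm ?_ ?_⟩
  · refine Ideal.radical_mono (sup_le_sup_right (Ideal.span_le.2 ?_) _)
    exact Set.range_subset_iff.2 hy
  · rw [← hx, Ideal.radical_le_radical_iff]
    refine sup_le (Ideal.span_le.2 ?_) (le_sup_right.trans Ideal.le_radical)
    exact Set.range_subset_iff.2 hxy

-- Write a power of `x_k` as `a_k + b_k` with `a_k ∈ I` and `b_k ∈ Ann M`, and take the `a_k`.
lemma exists_isRsop {x : Fin c → R}
    (hx : (Ideal.span (Set.range x) + Module.annihilator R M).radical
      = (I + Module.annihilator R M).radical) : ∃ y : Fin c → R, IsRsop I M y := by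
  have hpow (k : Fin c) : ∃ n, x k ^ n ∈ I + Module.annihilator R M := by
    have hmem : x k ∈ (I + Module.annihilator R M).radical :=
      hx ▸ Ideal.le_radical (Ideal.mem_sup_left (Ideal.subset_span ⟨k, rfl⟩))
    exact hmem
  choose n hn using hpow
  choose a ha b hb hab using fun k => Submodule.mem_sup.1 (hn k)
  refine ⟨a, isRsop_of_le_radical hx ha fun k => ⟨n k, hab k ▸ ?_⟩⟩
  exact Submodule.add_mem_sup (Ideal.subset_span ⟨k, rfl⟩) (hb k)

lemma IsRsop.pow {x : Fin c → R} (h : IsRsop I M x) {α : Fin c → ℕ} (hα : ∀ k, 0 < α k) :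
    IsRsop I M fun k => x k ^ α k :=
  isRsop_of_le_radical h.2 (fun k => Ideal.pow_mem_of_mem _ (h.1 k) _ (hα k)) fun k =>
    ⟨α k, Ideal.mem_sup_left (Ideal.subset_span ⟨k, rfl⟩)⟩

lemma IsRsop.isPowWeakSeq_sq {x : Fin c → R} (h : IsRsop I M x)
    (hweak : ∀ y : Fin c → R, IsRsop I M y → (∀ k, y k ∈ I ^ 2) → IsWeakSeq I M y) :
    IsPowWeakSeq I M fun k => x k ^ 2 := fun _ hα =>
  hweak _ ((h.pow fun _ => two_pos).pow hα) fun k =>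
    Ideal.pow_mem_of_mem _ (Ideal.pow_mem_pow (h.1 k) 2) _ (hα k)

end SystemsOfParameters

/-- **Corollary 4.3(iv).** Any `I`-relative quasi Buchsbaum module is `I`-relative
generalized Cohen-Macaulay. -/
theorem corollary_4_3_iv [IsNoetherianRing R] (I : Ideal R)
    (M : Type) [AddCommGroup M] [Module R M] [Module.Finite R M]
    (hqb : IsRelQuasiBuchsbaum I M) :
    IsRelGCM I M := by
  obtain ⟨c, hcd, ⟨⟨x, hx⟩, -⟩, hweak⟩ := hqb
  cases c with
  | zero => exact Or.inl hcd.2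
  | succ r =>
    obtain ⟨y, hy⟩ := exists_isRsop hx
    have hsq : IsRsop I M fun k => y k ^ 2 := hy.pow fun _ => two_pos
    have hpow : IsPowWeakSeq I M fun k => y k ^ 2 := hy.isPowWeakSeq_sq hweak
    have := hcd.1
    exact Or.inr ⟨r + 1, hcd, fun _ hi => hpow.finite_locH hsq.1 hi,
      hpow.isWeakSeq.not_finite_locH hsq.1 hsq.le_radical⟩
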